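/- arXiv:1610.00817 — 3 statements merged into one kernel-verified Lean document; each statement's English description precedes it below -/
import Mathlib

section
/- Let f : ℂ ∖ L → ℂ be holomorphic and doubly periodic. Suppose that f has at worst a simple pole at 0, i.e. there exist ε > 0 with the punctured ball B(0,ε) ∖ {0} contained in ℂ ∖ L and a holomorphic function g on B(0,ε) such that g(z) = z·f(z) for all z ∈ B(0,ε) ∖ {0}. Then f is constant. (This is the fact, used repeatedly in the paper, that there is no elliptic function of order 1.) -/
open Metric Filter

open scoped Topology

/-!
In `f z + f (-z)` the simple poles cancel, so by Liouville's theorem this sum is a constant, say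
`2 * k`. At a half-period `a` we have `f (-a) = f a`, so `f` takes the value `k` at every
half-period outside the lattice. Given such a half-period `b`, the product
`(f z - k) * (f (z + b) - k)` has no poles either, because the simple pole of each factor meets a
zero of the other, so it too is constant. It vanishes at a half-period `a` with `a` and `a + b`
outside the lattice, hence identically, and the ring of meromorphic functions on `ℂ` has no zero
divisors, so `f` is constantly `k`.
-/

theorem apply_eq_of_eventuallyEq_const_nhdsNE {X Y : Type*} [TopologicalSpace X]
    [TopologicalSpace Y] [T2Space Y] {f : X → Y} {x : X} {c : Y} [(𝓝[≠] x).NeBot]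
    (hf : ContinuousAt f x) (hc : f =ᶠ[𝓝[≠] x] fun _ ↦ c) : f x = c :=
  ((hf.eventuallyEq_nhds_iff_eventuallyEq_nhdsNE continuousAt_const).mp hc).eq_of_nhds

theorem indicator_compl_periodic {G M S : Type*} [AddGroup G] [Zero M] [SetLike S G]
    [AddSubgroupClass S G] (L : S) {f : G → M} {c : G} (hc : c ∈ L)
    (hf : ∀ z ∉ L, f (z + c) = f z) : Function.Periodic ((L : Set G)ᶜ.indicator f) c := by
  intro z
  by_cases hz : z ∈ L
  · simp [hz, add_mem hz hc]
  · simp [hz, hf z hz, add_mem_cancel_right hc]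

section Meromorphic

variable {𝕜 E : Type*} [NontriviallyNormedField 𝕜] [NormedAddCommGroup E] [NormedSpace 𝕜 E]

theorem meromorphicAt_add_iff_of_periodic {f : 𝕜 → E} {c : 𝕜} (hf : Function.Periodic f c)
    (x : 𝕜) : MeromorphicAt f (x + c) ↔ MeromorphicAt f x := by
  rw [← meromorphicAt_fun_comp_add_const_iff_meromorphicAt, hf.funext]

theorem meromorphicOrderAt_add_of_periodic {f : 𝕜 → E} {c : 𝕜} (hf : Function.Periodic f c)
    (x : 𝕜) : meromorphicOrderAt f (x + c) = meromorphicOrderAt f x := by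
  rw [← meromorphicOrderAt_fun_comp_add_const_eq_meromorphicOrderAt, hf.funext]

theorem periodic_toMeromorphicNFOn_univ {f : 𝕜 → E} {c : 𝕜} (hf : Meromorphic f)
    (hper : Function.Periodic f c) : Function.Periodic (toMeromorphicNFOn f Set.univ) c := by
  intro x
  have normal (y : 𝕜) : MeromorphicNFAt (toMeromorphicNFOn f Set.univ) y :=
    meromorphicNFOn_toMeromorphicNFOn f _ trivial
  have eq_self (y : 𝕜) : toMeromorphicNFOn f Set.univ =ᶠ[𝓝[≠] y] f :=
    hf.meromorphicOn.toMeromorphicNFOn_eq_self_on_nhdsNE trivial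
  have eq_shift :
      (fun z ↦ toMeromorphicNFOn f Set.univ (z + c)) =ᶠ[𝓝[≠] x] toMeromorphicNFOn f Set.univ := by
    have translate : Tendsto (· + c) (𝓝[≠] x) (𝓝[≠] (x + c)) := map_add_right_nhdsNE.le
    filter_upwards [translate.eventually (eq_self (x + c)), eq_self x] with z hzc hz
    rw [hzc, hz, hper z]
  have normal_shift := meromorphicNFAt_fun_comp_add_const_iff_meromorphicNFAt.mpr (normal (x + c))
  exact ((normal_shift.eventuallyEq_nhdsNE_iff_eventuallyEq_nhds (normal x)).mp
    eq_shift).eq_of_nhds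

theorem one_le_meromorphicOrderAt_of_apply_eq_zero {f : 𝕜 → E} {x : 𝕜} (hf : AnalyticAt 𝕜 f x)
    (hx : f x = 0) : 1 ≤ meromorphicOrderAt f x := by
  refine Order.succ_le_of_lt ((tendsto_zero_iff_meromorphicOrderAt_pos hf.meromorphicAt).mp ?_)
  simpa only [hx] using hf.continuousAt.continuousWithinAt.tendsto

theorem meromorphicOrderAt_mul_nonneg_of_neg_one_le {f g : 𝕜 → 𝕜} {x : 𝕜}
    (hf : MeromorphicAt f x) (hord : -1 ≤ meromorphicOrderAt f x) (hg : AnalyticAt 𝕜 g x)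
    (hx : g x = 0) : 0 ≤ meromorphicOrderAt (f * g) x := by
  rw [meromorphicOrderAt_mul hf hg.meromorphicAt]
  exact add_le_add hord (one_le_meromorphicOrderAt_of_apply_eq_zero hg hx)

theorem meromorphicOrderAt_sub_mul {f : 𝕜 → 𝕜} {x : 𝕜} (hf : MeromorphicAt f x) :
    meromorphicOrderAt (fun z ↦ (z - x) * f z) x = 1 + meromorphicOrderAt f x := by
  have order_sub : meromorphicOrderAt (fun z ↦ z - x) x = 1 := by simp
  rw [← order_sub]
  exact meromorphicOrderAt_mul (by fun_prop) hf

theorem one_add_le_meromorphicOrderAt_sub_mul_iff {f : 𝕜 → 𝕜} {x : 𝕜} (hf : MeromorphicAt f x)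
    (n : WithTop ℤ) :
    1 + n ≤ meromorphicOrderAt (fun z ↦ (z - x) * f z) x ↔ n ≤ meromorphicOrderAt f x := by
  rw [meromorphicOrderAt_sub_mul hf, WithTop.add_le_add_iff_left WithTop.one_ne_top]

theorem meromorphicAt_and_neg_one_le_meromorphicOrderAt_iff {f : 𝕜 → 𝕜} {x : 𝕜} :
    MeromorphicAt f x ∧ -1 ≤ meromorphicOrderAt f x ↔
      ∃ g : 𝕜 → 𝕜, AnalyticAt 𝕜 g x ∧ ∀ᶠ z in 𝓝[≠] x, g z = (z - x) * f z := by
  constructor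
  · rintro ⟨hf, hord⟩
    obtain ⟨g, hg, hgf⟩ := (MeromorphicAt.meromorphicOrderAt_nonneg_iff (by fun_prop)).mp
      ((one_add_le_meromorphicOrderAt_sub_mul_iff hf (-1)).mpr hord)
    exact ⟨g, hg, hgf.symm⟩
  · rintro ⟨g, hg, hgf⟩
    have hf : MeromorphicAt f x := by
      refine MeromorphicAt.congr (f := fun z ↦ (z - x)⁻¹ * g z) (by fun_prop) ?_
      filter_upwards [hgf, self_mem_nhdsWithin] with z hz hzx
      rw [hz, inv_mul_cancel_left₀ (sub_ne_zero.mpr hzx)]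
    refine ⟨hf, (one_add_le_meromorphicOrderAt_sub_mul_iff hf (-1)).mp ?_⟩
    rw [← meromorphicOrderAt_congr hgf]
    exact hg.meromorphicOrderAt_nonneg

theorem meromorphicOrderAt_add_comp_neg_nonneg {f : 𝕜 → 𝕜} (hf : MeromorphicAt f 0)
    (hord : -1 ≤ meromorphicOrderAt f 0) : 0 ≤ meromorphicOrderAt (fun z ↦ f z + f (-z)) 0 := by
  obtain ⟨g, hg, hgf⟩ := meromorphicAt_and_neg_one_le_meromorphicOrderAt_iff.mp ⟨hf, hord⟩
  have hf_neg : MeromorphicAt (fun z ↦ f (-z)) 0 :=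
    MeromorphicAt.comp_analyticAt (by simpa using hf) (by fun_prop)
  have hg_neg : AnalyticAt 𝕜 (fun z ↦ g (-z)) 0 :=
    AnalyticAt.fun_comp (g := g) (by simpa using hg) (by fun_prop)
  have eq_odd : (fun z ↦ g z - g (-z)) =ᶠ[𝓝[≠] 0] fun z ↦ (z - 0) * (f z + f (-z)) := by
    have tendsto_neg : Tendsto (fun z : 𝕜 ↦ -z) (𝓝[≠] 0) (𝓝[≠] 0) := by
      have : map (fun z : 𝕜 ↦ -z) (𝓝[≠] 0) = 𝓝[≠] (-0) := neg_nhdsNE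
      exact (neg_zero (G := 𝕜) ▸ this).le
    filter_upwards [hgf, tendsto_neg.eventually hgf] with z hz hz_neg
    rw [hz, hz_neg]
    ring
  refine (one_add_le_meromorphicOrderAt_sub_mul_iff (hf.fun_add hf_neg) 0).mp ?_
  rw [← meromorphicOrderAt_congr eq_odd]
  exact one_le_meromorphicOrderAt_of_apply_eq_zero (hg.sub hg_neg) (by simp)

theorem meromorphicOrderAt_eq_top_or_of_mul {𝕜 : Type*} [RCLike 𝕜] {f g : 𝕜 → 𝕜}
    (hf : Meromorphic f) (hg : Meromorphic g) {x : 𝕜} (hfg : meromorphicOrderAt (f * g) x = ⊤) :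
    (∀ z, meromorphicOrderAt f z = ⊤) ∨ ∀ z, meromorphicOrderAt g z = ⊤ := by
  rw [meromorphicOrderAt_mul (hf x) (hg x), WithTop.add_eq_top] at hfg
  refine hfg.imp (fun hx z ↦ ?_) (fun hx z ↦ ?_) <;> by_contra hz
  · exact hf.exists_meromorphicOrderAt_ne_top_iff_forall.mp ⟨z, hz⟩ x hx
  · exact hg.exists_meromorphicOrderAt_ne_top_iff_forall.mp ⟨z, hz⟩ x hx

theorem meromorphicAt_and_neg_one_le_meromorphicOrderAt_of_differentiableOn {f g : ℂ → ℂ} {x : ℂ}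
    {s : Set ℂ} (hs : s ∈ 𝓝 x) (hg : DifferentiableOn ℂ g s)
    (hgf : ∀ z ∈ s \ {x}, g z = (z - x) * f z) :
    MeromorphicAt f x ∧ -1 ≤ meromorphicOrderAt f x :=
  meromorphicAt_and_neg_one_le_meromorphicOrderAt_iff.mpr
    ⟨g, hg.analyticAt hs, eventually_of_mem (sdiff_mem_nhdsWithin_compl hs {x}) hgf⟩

end Meromorphic

theorem exists_eventuallyEq_const_of_periodic {E : Type*} [NormedAddCommGroup E] [NormedSpace ℂ E]
    (L : Submodule ℤ ℂ) [DiscreteTopology L] [IsZLattice ℝ L] {f : ℂ → E} (hf : Meromorphic f)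
    (hper : ∀ l ∈ L, Function.Periodic f l) (hord : ∀ z, 0 ≤ meromorphicOrderAt f z) :
    ∃ c, ∀ z, f =ᶠ[𝓝[≠] z] fun _ ↦ c := by
  let F := toMeromorphicNFOn f Set.univ
  have F_differentiable : Differentiable ℂ F := by
    intro z
    refine ((meromorphicNFOn_toMeromorphicNFOn f Set.univ
      trivial).meromorphicOrderAt_nonneg_iff_analyticAt.mp ?_).differentiableAt
    rw [meromorphicOrderAt_toMeromorphicNFOn hf.meromorphicOn (Set.mem_univ z)]
    exact hord z
  have F_bounded : Bornology.IsBounded (Set.range F) :=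
    (IsZLattice.isCompact_range_of_periodic L F F_differentiable.continuous
      fun z l hl ↦ periodic_toMeromorphicNFOn_univ hf (hper l hl) z).isBounded
  refine ⟨F 0, fun z ↦ ?_⟩
  filter_upwards [hf.meromorphicOn.toMeromorphicNFOn_eq_self_on_nhdsNE (Set.mem_univ z)] with w hw
  exact hw.symm.trans (F_differentiable.apply_eq_apply_of_bounded F_bounded w 0)

/-- `f` is periodic with respect to the lattice `L` and holomorphic off `L`, with at most a simple
pole at `0`, and hence at every point of `L`. Periodicity includes the values of `f` on `L`, which
carry no meaning otherwise. -/
structure IsEllipticWithSimplePole (L : Submodule ℤ ℂ) (f : ℂ → ℂ) : Prop where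
  periodic : ∀ l ∈ L, Function.Periodic f l
  analyticAt : ∀ z ∉ L, AnalyticAt ℂ f z
  meromorphicAt_zero : MeromorphicAt f 0
  neg_one_le_order_zero : -1 ≤ meromorphicOrderAt f 0

namespace IsEllipticWithSimplePole

variable {L : Submodule ℤ ℂ} {f : ℂ → ℂ}

theorem meromorphic (hf : IsEllipticWithSimplePole L f) : Meromorphic f := by
  intro z
  by_cases hz : z ∈ L
  · simpa using (meromorphicAt_add_iff_of_periodic (hf.periodic z hz) 0).mpr hf.meromorphicAt_zero
  · exact (hf.analyticAt z hz).meromorphicAt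

theorem sub_const (hf : IsEllipticWithSimplePole L f) (k : ℂ) :
    IsEllipticWithSimplePole L (fun z ↦ f z - k) where
  periodic l hl z := by simp only [hf.periodic l hl z]
  analyticAt z hz := (hf.analyticAt z hz).sub analyticAt_const
  meromorphicAt_zero := hf.meromorphicAt_zero.sub (.const k 0)
  neg_one_le_order_zero := by
    refine le_trans (le_min hf.neg_one_le_order_zero ?_)
      (meromorphicOrderAt_add hf.meromorphicAt_zero (.const (-k) 0))
    exact le_trans (by decide) (analyticAt_const (v := -k)).meromorphicOrderAt_nonneg

theorem neg_one_le_order (hf : IsEllipticWithSimplePole L f) {l : ℂ} (hl : l ∈ L) :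
    -1 ≤ meromorphicOrderAt f l := by
  rw [← zero_add l, meromorphicOrderAt_add_of_periodic (hf.periodic l hl)]
  exact hf.neg_one_le_order_zero

theorem analyticAt_shift (hf : IsEllipticWithSimplePole L f) {b z : ℂ} (hz : z + b ∉ L) :
    AnalyticAt ℂ (fun w ↦ f (w + b)) z :=
  AnalyticAt.fun_comp (f := fun w ↦ w + b) (hf.analyticAt (z + b) hz) (by fun_prop)

theorem meromorphic_shift (hf : IsEllipticWithSimplePole L f) (b : ℂ) :
    Meromorphic (fun w ↦ f (w + b)) := fun w ↦
  meromorphicAt_fun_comp_add_const_iff_meromorphicAt.mpr (hf.meromorphic (w + b))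

section

variable [DiscreteTopology L] [IsZLattice ℝ L]

theorem apply_add_apply_neg_eq (hf : IsEllipticWithSimplePole L f) {z w : ℂ} (hz : z ∉ L)
    (hw : w ∉ L) : f z + f (-z) = f w + f (-w) := by
  have periodic (l : ℂ) (hl : l ∈ L) : Function.Periodic (fun z ↦ f z + f (-z)) l := by
    intro z
    simp only [neg_add, hf.periodic l hl z, hf.periodic (-l) (neg_mem hl) (-z)]
  have analytic {z : ℂ} (hz : z ∉ L) : AnalyticAt ℂ (fun z ↦ f z + f (-z)) z :=
    (hf.analyticAt z hz).add
      ((hf.analyticAt (-z) (by simpa using hz)).fun_comp (by fun_prop))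
  have order_nonneg (z : ℂ) : 0 ≤ meromorphicOrderAt (fun z ↦ f z + f (-z)) z := by
    by_cases hz : z ∈ L
    · rw [← zero_add z, meromorphicOrderAt_add_of_periodic (periodic z hz)]
      exact meromorphicOrderAt_add_comp_neg_nonneg hf.meromorphicAt_zero hf.neg_one_le_order_zero
    · exact (analytic hz).meromorphicOrderAt_nonneg
  obtain ⟨c, hc⟩ := exists_eventuallyEq_const_of_periodic L
    (hf.meromorphic.add fun z ↦ (hf.meromorphic (-z)).comp_analyticAt (by fun_prop))
    periodic order_nonneg
  rw [apply_eq_of_eventuallyEq_const_nhdsNE (analytic hz).continuousAt (hc z),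
    apply_eq_of_eventuallyEq_const_nhdsNE (analytic hw).continuousAt (hc w)]

theorem apply_eq_of_two_mul_mem (hf : IsEllipticWithSimplePole L f) {a b : ℂ} (ha : a ∉ L)
    (ha₂ : 2 * a ∈ L) (hb : b ∉ L) (hb₂ : 2 * b ∈ L) : f a = f b := by
  have apply_neg {x : ℂ} (hx : 2 * x ∈ L) : f (-x) = f x := by
    rw [← hf.periodic _ hx (-x)]
    ring_nf
  have := hf.apply_add_apply_neg_eq ha hb
  rw [apply_neg ha₂, apply_neg hb₂] at this
  linear_combination this / 2

end

theorem order_mul_shift_nonneg (hf : IsEllipticWithSimplePole L f) {b : ℂ} (hb : b ∉ L)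
    (hb₂ : 2 * b ∈ L) (hfb : f b = 0) (z : ℂ) :
    0 ≤ meromorphicOrderAt (f * fun w ↦ f (w + b)) z := by
  by_cases hz : z ∈ L
  · refine meromorphicOrderAt_mul_nonneg_of_neg_one_le (hf.meromorphic z) (hf.neg_one_le_order hz)
      (hf.analyticAt_shift ?_) ?_
    · rwa [Submodule.add_mem_iff_right _ hz]
    · rw [add_comm, hf.periodic z hz, hfb]
  by_cases hzb : z + b ∈ L
  · rw [mul_comm]
    refine meromorphicOrderAt_mul_nonneg_of_neg_one_le (hf.meromorphic_shift b z) ?_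
      (hf.analyticAt z hz) ?_
    · rw [meromorphicOrderAt_fun_comp_add_const_eq_meromorphicOrderAt]
      exact hf.neg_one_le_order hzb
    · have : z - b ∈ L := by simpa [two_mul] using sub_mem hzb hb₂
      rw [← hfb, ← hf.periodic _ this b, add_sub_cancel]
  · exact ((hf.analyticAt z hz).mul (hf.analyticAt_shift hzb)).meromorphicOrderAt_nonneg

variable [DiscreteTopology L] [IsZLattice ℝ L]

theorem order_eq_top_of_apply_eq_zero (hf : IsEllipticWithSimplePole L f) {a b : ℂ} (ha : a ∉ L)
    (hfa : f a = 0) (hb : b ∉ L) (hb₂ : 2 * b ∈ L) (hfb : f b = 0) (hab : a + b ∉ L) (z : ℂ) :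
    meromorphicOrderAt f z = ⊤ := by
  have periodic (l : ℂ) (hl : l ∈ L) : Function.Periodic (f * fun w ↦ f (w + b)) l := by
    intro w
    simp only [Pi.mul_apply, add_right_comm w l b, hf.periodic l hl w, hf.periodic l hl (w + b)]
  obtain ⟨c, hc⟩ := exists_eventuallyEq_const_of_periodic L
    (hf.meromorphic.mul (hf.meromorphic_shift b)) periodic (hf.order_mul_shift_nonneg hb hb₂ hfb)
  have c_eq_zero : c = 0 := by
    have continuous_at_a : ContinuousAt (f * fun w ↦ f (w + b)) a :=
      ((hf.analyticAt a ha).mul (hf.analyticAt_shift hab)).continuousAt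
    rw [← apply_eq_of_eventuallyEq_const_nhdsNE continuous_at_a (hc a), Pi.mul_apply, hfa, zero_mul]
  have product_order : meromorphicOrderAt (f * fun w ↦ f (w + b)) 0 = ⊤ :=
    meromorphicOrderAt_eq_top_iff.mpr (c_eq_zero ▸ hc 0)
  rcases meromorphicOrderAt_eq_top_or_of_mul hf.meromorphic (hf.meromorphic_shift b)
    product_order with order_f | order_shift
  · exact order_f z
  · simpa [meromorphicOrderAt_fun_comp_add_const_eq_meromorphicOrderAt] using order_shift (z - b)

theorem apply_eq_of_half_periods (hf : IsEllipticWithSimplePole L f) {a b : ℂ} (ha : a ∉ L)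
    (ha₂ : 2 * a ∈ L) (hb : b ∉ L) (hb₂ : 2 * b ∈ L) (hab : a + b ∉ L) {z : ℂ} (hz : z ∉ L) :
    f z = f a := by
  have order_top := (hf.sub_const (f a)).order_eq_top_of_apply_eq_zero ha (sub_self _) hb hb₂
    (sub_eq_zero.mpr (hf.apply_eq_of_two_mul_mem hb hb₂ ha ha₂)) hab z
  have apply_sub_eq_zero : f z - f a = 0 :=
    apply_eq_of_eventuallyEq_const_nhdsNE (f := fun w ↦ f w - f a)
      ((hf.sub_const (f a)).analyticAt z hz).continuousAt
      (meromorphicOrderAt_eq_top_iff.mp order_top)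
  exact sub_eq_zero.mp apply_sub_eq_zero

end IsEllipticWithSimplePole

section PeriodPair

variable (P : PeriodPair)

theorem add_half_periods_notMem_lattice : P.ω₁ / 2 + P.ω₂ / 2 ∉ P.lattice := by
  simpa [inv_mul_eq_div] using
    (P.mul_ω₁_add_mul_ω₂_mem_lattice (α := 1 / 2) (β := 1 / 2)).not.mpr (by norm_num)

theorem periodic_of_mem_lattice {α : Type*} {f : ℂ → α} (h₁ : Function.Periodic f P.ω₁)
    (h₂ : Function.Periodic f P.ω₂) {l : ℂ} (hl : l ∈ P.lattice) : Function.Periodic f l := by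
  obtain ⟨m, n, rfl⟩ := PeriodPair.mem_lattice.mp hl
  exact (h₁.int_mul m).add_period (h₂.int_mul n)

theorem isEllipticWithSimplePole_indicator_compl_lattice {f : ℂ → ℂ}
    (hf : DifferentiableOn ℂ f (P.lattice : Set ℂ)ᶜ)
    (h₁ : ∀ z ∉ P.lattice, f (z + P.ω₁) = f z) (h₂ : ∀ z ∉ P.lattice, f (z + P.ω₂) = f z)
    (hmer : MeromorphicAt f 0) (hord : -1 ≤ meromorphicOrderAt f 0) :
    IsEllipticWithSimplePole P.lattice ((P.lattice : Set ℂ)ᶜ.indicator f) := by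
  have eq_near_zero : f =ᶠ[𝓝[≠] 0] (P.lattice : Set ℂ)ᶜ.indicator f := by
    rw [EventuallyEq, eventually_nhdsWithin_iff]
    filter_upwards [P.compl_lattice_sdiff_singleton_mem_nhds 0] with z hz hz₀
    have hzL : z ∈ (P.lattice : Set ℂ)ᶜ := fun hzL ↦ hz ⟨hzL, hz₀⟩
    exact (Set.indicator_of_mem hzL f).symm
  refine ⟨fun l hl ↦ ?_, fun z hz ↦ ?_, hmer.congr eq_near_zero, ?_⟩
  · exact periodic_of_mem_lattice P (indicator_compl_periodic P.lattice P.ω₁_mem_lattice h₁)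
      (indicator_compl_periodic P.lattice P.ω₂_mem_lattice h₂) hl
  · have compl_mem_nhds := P.isClosed_lattice.isOpen_compl.mem_nhds hz
    refine (hf.analyticAt compl_mem_nhds).congr ?_
    exact (Set.eqOn_indicator.eventuallyEq_of_mem compl_mem_nhds).symm
  · rwa [← meromorphicOrderAt_congr eq_near_zero]

end PeriodPair

theorem no_elliptic_function_of_order_one_general (P : PeriodPair) (f : ℂ → ℂ)
    (hf : DifferentiableOn ℂ f (P.lattice : Set ℂ)ᶜ)
    (h₁ : ∀ z ∉ P.lattice, f (z + P.ω₁) = f z) (h₂ : ∀ z ∉ P.lattice, f (z + P.ω₂) = f z)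
    (hmer : MeromorphicAt f 0) (hord : -1 ≤ meromorphicOrderAt f 0) :
    ∀ z ∉ P.lattice, ∀ w ∉ P.lattice, f z = f w := by
  have elliptic := isEllipticWithSimplePole_indicator_compl_lattice P hf h₁ h₂ hmer hord
  have eq_at_half_period {z : ℂ} (hz : z ∉ P.lattice) :
      f z = (P.lattice : Set ℂ)ᶜ.indicator f (P.ω₁ / 2) := by
    rw [← Set.indicator_of_mem (s := (P.lattice : Set ℂ)ᶜ) hz f]
    refine elliptic.apply_eq_of_half_periods P.ω₁_div_two_notMem_lattice ?_
      P.ω₂_div_two_notMem_lattice ?_ (add_half_periods_notMem_lattice P) hz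
    · simpa [mul_div_cancel₀] using P.ω₁_mem_lattice
    · simpa [mul_div_cancel₀] using P.ω₂_mem_lattice
  intro z hz w hw
  rw [eq_at_half_period hz, eq_at_half_period hw]

/-- The periods `1` and `ω` for `ω` in the upper half-plane, as a `PeriodPair`. -/
def normalizedPeriodPair (ω : ℂ) (hω : 0 < ω.im) : PeriodPair where
  ω₁ := 1
  ω₂ := ω
  indep := by
    rw [LinearIndependent.pair_iff]
    intro s t hst
    have ht : t = 0 := by simpa [hω.ne'] using congrArg Complex.im hst
    have hs : s = 0 := by simpa [ht] using congrArg Complex.re hst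
    exact ⟨hs, ht⟩

theorem coe_lattice_normalizedPeriodPair {ω : ℂ} (hω : 0 < ω.im) :
    ((normalizedPeriodPair ω hω).lattice : Set ℂ) = {z | ∃ m n : ℤ, z = (m : ℂ) + (n : ℂ) * ω} := by
  ext z
  simp only [Set.mem_ofPred_eq, SetLike.mem_coe, PeriodPair.mem_lattice, normalizedPeriodPair,
    mul_one, eq_comm]

/-- There is no elliptic function of order 1: a doubly periodic function, holomorphic
off the lattice `L`, with at worst a simple pole at `0`, is constant. -/
theorem no_elliptic_function_of_order_one
    (ω : ℂ) (hω : 0 < ω.im)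
    (L : Set ℂ) (hL : L = {z : ℂ | ∃ m n : ℤ, z = (m : ℂ) + (n : ℂ) * ω})
    (f : ℂ → ℂ)
    (hf : DifferentiableOn ℂ f Lᶜ)
    (hper : ∀ z ∉ L, f (z + 1) = f z ∧ f (z + ω) = f z)
    (hpole : ∃ ε > 0, (ball (0 : ℂ) ε \ {0}) ⊆ Lᶜ ∧
      ∃ g : ℂ → ℂ, DifferentiableOn ℂ g (ball (0 : ℂ) ε) ∧
        ∀ z ∈ ball (0 : ℂ) ε \ {0}, g z = z * f z) :
    ∀ z ∉ L, ∀ w ∉ L, f z = f w := by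
  obtain rfl := hL.trans (coe_lattice_normalizedPeriodPair hω).symm
  obtain ⟨ε, hε, -, g, hg, hgf⟩ := hpole
  obtain ⟨hmer, hord⟩ := meromorphicAt_and_neg_one_le_meromorphicOrderAt_of_differentiableOn
    (ball_mem_nhds 0 hε) hg (by simpa only [sub_zero] using hgf)
  exact no_elliptic_function_of_order_one_general (normalizedPeriodPair ω hω) f hf
    (fun z hz ↦ (hper z hz).1) (fun z hz ↦ (hper z hz).2) hmer hord
end

section
/- For every integer n ≥ 2 there exists a holomorphic doubly periodic function f : ℂ ∖ L → ℂ such that zⁿ·f(z) → 1 as z → 0 with z ∈ ℂ ∖ L. (In the paper such functions are realized as normalized derivatives ℘^{(n−2)} of the Weierstrass ℘-function with periods (1, ω); they have a pole of exact order n at each lattice point and no other poles.) -/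
open Metric Filter

/-!
Near a lattice point `l`, the Weierstrass function `℘` is `1 / (z - l) ^ 2` plus a continuous
function, and `-℘' / 2` is `1 / (z - l) ^ 3` plus a continuous function. Leading coefficients of
poles multiply, so `℘ ^ a * (-℘' / 2) ^ b` has a pole of order `2 * a + 3 * b` with leading
coefficient `1`, and every `n ≥ 2` is of the form `2 * a + 3 * b`. With these monomials
in place of the `(n - 2)`-th derivative of `℘`, only the principal parts of `℘` and `℘'` are needed.
-/

open scoped Topology PeriodPair

theorem exists_two_mul_add_three_mul_eq {n : ℕ} (hn : 2 ≤ n) :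
    ∃ a b : ℕ, 2 * a + 3 * b = n :=
  ⟨(n - 3 * (n % 2)) / 2, n % 2, by lia⟩

section LeadingCoefficient

variable {𝕜 : Type*} [NormedField 𝕜] {f g : 𝕜 → 𝕜} {x c d : 𝕜} {k m : ℕ}

theorem tendsto_sub_pow_mul_of_eventually_eq_add_div_pow (hk : k ≠ 0) (hg : ContinuousAt g x)
    (hfg : ∀ᶠ z in 𝓝[≠] x, f z = g z + c / (z - x) ^ k) :
    Tendsto (fun z ↦ (z - x) ^ k * f z) (𝓝[≠] x) (𝓝 c) := by
  have regular_part : Tendsto (fun z ↦ (z - x) ^ k * g z + c) (𝓝 x) (𝓝 c) := by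
    have : ContinuousAt (fun z ↦ (z - x) ^ k * g z + c) x := by fun_prop
    simpa [ContinuousAt, hk] using this
  refine (regular_part.mono_left nhdsWithin_le_nhds).congr' ?_
  filter_upwards [hfg, self_mem_nhdsWithin] with z hfz hz
  have hzx : (z - x) ^ k ≠ 0 := pow_ne_zero k (sub_ne_zero.2 hz)
  rw [hfz, mul_add, mul_div_cancel₀ c hzx]

theorem tendsto_sub_pow_mul_pow_mul_pow {l : Filter 𝕜}
    (hf : Tendsto (fun z ↦ (z - x) ^ k * f z) l (𝓝 c))
    (hg : Tendsto (fun z ↦ (z - x) ^ m * g z) l (𝓝 d)) (a b : ℕ) :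
    Tendsto (fun z ↦ (z - x) ^ (k * a + m * b) * (f z ^ a * g z ^ b)) l (𝓝 (c ^ a * d ^ b)) := by
  refine ((hf.pow a).mul (hg.pow b)).congr fun z ↦ ?_
  ring

end LeadingCoefficient

section Weierstrass

variable (P : PeriodPair)

theorem tendsto_sub_sq_mul_weierstrassP (l : P.lattice) :
    Tendsto (fun z ↦ (z - l) ^ 2 * ℘[P] z) (𝓝[≠] (l : ℂ)) (𝓝 1) := by
  refine tendsto_sub_pow_mul_of_eventually_eq_add_div_pow
    (g := fun z ↦ ℘[P - l] z - 1 / (l : ℂ) ^ 2) two_ne_zero ?_ (.of_forall fun z ↦ ?_)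
  · exact (P.analyticAt_weierstrassPExcept l).continuousAt.sub continuousAt_const
  · rw [← P.weierstrassPExcept_add l]
    ring

theorem tendsto_sub_cube_mul_neg_derivWeierstrassP_div_two (l : P.lattice) :
    Tendsto (fun z ↦ (z - l) ^ 3 * (-℘'[P] z / 2)) (𝓝[≠] (l : ℂ)) (𝓝 1) := by
  refine tendsto_sub_pow_mul_of_eventually_eq_add_div_pow
    (g := fun z ↦ -℘'[P - l] z / 2) three_ne_zero ?_ (.of_forall fun z ↦ ?_)
  · exact (P.analyticAt_derivWeierstrassPExcept l).continuousAt.neg.div_const 2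
  · rw [← P.derivWeierstrassPExcept_sub l]
    ring

theorem exists_elliptic_function_of_order_ge_two_general {n : ℕ} (hn : 2 ≤ n) :
    ∃ f : ℂ → ℂ, DifferentiableOn ℂ f (P.lattice : Set ℂ)ᶜ ∧
      ∀ l : P.lattice, f.Periodic l ∧
        Tendsto (fun z ↦ (z - l) ^ n * f z) (𝓝[≠] (l : ℂ)) (𝓝 1) := by
  obtain ⟨a, b, rfl⟩ := exists_two_mul_add_three_mul_eq hn
  refine ⟨fun z ↦ ℘[P] z ^ a * (-℘'[P] z / 2) ^ b, ?_, fun l ↦ ⟨fun z ↦ ?_, ?_⟩⟩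
  · exact (P.differentiableOn_weierstrassP.pow a).mul
      ((P.differentiableOn_derivWeierstrassP.neg.div_const 2).pow b)
  · simp only [P.weierstrassP_add_coe, P.derivWeierstrassP_add_coe]
  · simpa using tendsto_sub_pow_mul_pow_mul_pow (tendsto_sub_sq_mul_weierstrassP P l)
      (tendsto_sub_cube_mul_neg_derivWeierstrassP_div_two P l) a b

end Weierstrass

section NormalizedPeriods

variable {ω : ℂ}

theorem linearIndependent_one_of_im_ne_zero (hω : ω.im ≠ 0) :
    LinearIndependent ℝ ![(1 : ℂ), ω] :=
  (LinearIndependent.pair_iff' one_ne_zero).2 fun a ha ↦ hω (by simp [← ha])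

/-- The period pair `(1, ω)`, for `ω` off the real axis. -/
def periodPairOne (hω : ω.im ≠ 0) : PeriodPair where
  ω₁ := 1
  ω₂ := ω
  indep := linearIndependent_one_of_im_ne_zero hω

theorem coe_lattice_periodPairOne (hω : ω.im ≠ 0) :
    ((periodPairOne hω).lattice : Set ℂ) = {z : ℂ | ∃ m n : ℤ, z = (m : ℂ) + (n : ℂ) * ω} := by
  ext z
  simp only [SetLike.mem_coe, PeriodPair.mem_lattice, periodPairOne, mul_one, Set.mem_ofPred_eq,
    eq_comm]

end NormalizedPeriods

/-- For every `n ≥ 2` there is a doubly periodic function, holomorphic off the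
lattice `L`, with `z ^ n * f z → 1` as `z → 0` off `L` (realized by normalized
derivatives of the Weierstrass ℘-function). -/
theorem exists_elliptic_function_of_order_ge_two
    (ω : ℂ) (hω : 0 < ω.im)
    (L : Set ℂ) (hL : L = {z : ℂ | ∃ m n : ℤ, z = (m : ℂ) + (n : ℂ) * ω})
    (n : ℕ) (hn : 2 ≤ n) :
    ∃ f : ℂ → ℂ, DifferentiableOn ℂ f Lᶜ ∧
      (∀ z ∉ L, f (z + 1) = f z ∧ f (z + ω) = f z) ∧
      Tendsto (fun z => z ^ n * f z) (nhdsWithin 0 Lᶜ) (nhds 1) := by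
  let P := periodPairOne hω.ne'
  obtain rfl : L = P.lattice := hL.trans (coe_lattice_periodPairOne hω.ne').symm
  obtain ⟨f, f_diff, f_lattice⟩ := exists_elliptic_function_of_order_ge_two_general P hn
  have off_lattice_le : 𝓝[(P.lattice : Set ℂ)ᶜ] 0 ≤ 𝓝[≠] 0 :=
    nhdsWithin_mono 0 (by simp)
  refine ⟨f, f_diff, fun z _ ↦
    ⟨(f_lattice ⟨1, P.ω₁_mem_lattice⟩).1 z, (f_lattice ⟨ω, P.ω₂_mem_lattice⟩).1 z⟩, ?_⟩
  simpa using (f_lattice 0).2.mono_left off_lattice_le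
end

section
/- Let (A, B, C) ∈ ℂ³ with (A, B, C) ≠ (0, 0, 0). The ℂ-linear map T : ℂ⁴ → ℂ³ defined by T(t₀, t₁, t₂, t₃) = (A·t₂ − B·t₁, 2·(A·t₃ − C·t₁), B·t₃ − C·t₂) has kernel of dimension 2 and range of dimension 2. (This linear map is the bracket map [Λ₀, −] : H⁰(S, Θ_S) → H⁰(S, ∧²Θ_S) for the Poisson structure Λ₀ = (A + Bξ + Cξ²)·∂/∂ξ ∧ ∂/∂u on S₀ = X × ℙ¹, expressed in the bases ∂/∂u, ∂/∂ξ, ξ·∂/∂ξ, ξ²·∂/∂ξ and ∂/∂ξ∧∂/∂u, ξ·∂/∂ξ∧∂/∂u, ξ²·∂/∂ξ∧∂/∂u; the kernel dimension 2 is dim ℍ⁰(S₀, Θ^•) and the cokernel dimension 1 is dim ℍ²(S₀, Θ^•).) -/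
/-!
Up to order, sign and the factor `2`, the coordinates of `T t` are those of the cross product of
`(A, B, C)` with the truncation `(t₁, t₂, t₃)`. Over a field in which `2 ≠ 0` the map `T` therefore
has the same kernel as the truncation followed by the cross product with `(A, B, C)`. The
truncation is surjective, and the cross product with a nonzero vector vanishes exactly on the line
through it, so this composite has rank `3 - 1 = 2`.
-/

section CrossProduct

variable {K : Type*} [Field K] {a : Fin 3 → K}

theorem ker_crossProduct_of_ne_zero (ha : a ≠ 0) :
    LinearMap.ker (crossProduct a) = Submodule.span K {a} := by
  ext v
  rw [LinearMap.mem_ker, ← not_iff_not, ← ne_eq, crossProduct_ne_zero_iff_linearIndependent,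
    LinearIndependent.pair_iff' ha, Submodule.mem_span_singleton, not_exists]

theorem finrank_range_crossProduct_of_ne_zero (ha : a ≠ 0) :
    Module.finrank K (LinearMap.range (crossProduct a)) = 2 := by
  have rank_nullity := LinearMap.finrank_range_add_finrank_ker (crossProduct a)
  rw [ker_crossProduct_of_ne_zero ha, finrank_span_singleton ha, Module.finrank_fin_fun]
    at rank_nullity
  lia

theorem finrank_range_crossProduct_comp_of_surjective {V : Type*} [AddCommGroup V] [Module K V]
    (ha : a ≠ 0) {f : V →ₗ[K] Fin 3 → K} (hf : Function.Surjective f) :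
    Module.finrank K (LinearMap.range (crossProduct a ∘ₗ f)) = 2 := by
  rw [LinearMap.range_comp_of_range_eq_top _ (LinearMap.range_eq_top.2 hf),
    finrank_range_crossProduct_of_ne_zero ha]

end CrossProduct

theorem ker_bracket_map_eq_ker_crossProduct_comp_tail {R : Type*} [CommRing R] [NoZeroDivisors R]
    [NeZero (2 : R)] {A B C : R} {T : (Fin 4 → R) →ₗ[R] (Fin 3 → R)}
    (hT : ∀ t : Fin 4 → R,
      T t = ![A * t 2 - B * t 1, 2 * (A * t 3 - C * t 1), B * t 3 - C * t 2]) :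
    LinearMap.ker T =
      LinearMap.ker (crossProduct ![A, B, C] ∘ₗ LinearMap.funLeft R R Fin.succ) := by
  ext t
  have bracket_eq_zero_iff :
      T t = 0 ↔ A * t 2 = B * t 1 ∧ A * t 3 = C * t 1 ∧ B * t 3 = C * t 2 := by
    simp [hT, sub_eq_zero, two_ne_zero]
  have cross_eq_zero_iff : crossProduct ![A, B, C] (LinearMap.funLeft R R Fin.succ t) = 0 ↔
      B * t 3 = C * t 2 ∧ C * t 1 = A * t 3 ∧ A * t 2 = B * t 1 := by
    simp [cross_apply, LinearMap.funLeft_apply, sub_eq_zero]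
  rw [LinearMap.mem_ker, LinearMap.mem_ker, LinearMap.comp_apply, bracket_eq_zero_iff,
    cross_eq_zero_iff]
  tauto

theorem bracket_map_S0_rank_general {K : Type*} [Field K] [NeZero (2 : K)]
    (A B C : K) (hABC : (A, B, C) ≠ (0, 0, 0))
    (T : (Fin 4 → K) →ₗ[K] (Fin 3 → K))
    (hT : ∀ t : Fin 4 → K,
      T t = ![A * t 2 - B * t 1, 2 * (A * t 3 - C * t 1), B * t 3 - C * t 2]) :
    Module.finrank K (LinearMap.ker T) = 2 ∧ Module.finrank K (LinearMap.range T) = 2 := by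
  have coeffs_ne_zero : ![A, B, C] ≠ 0 := by simpa using hABC
  have tail_surjective : Function.Surjective (LinearMap.funLeft K K (Fin.succ : Fin 3 → Fin 4)) :=
    LinearMap.funLeft_surjective_of_injective K K _ (Fin.succ_injective 3)
  have rank_cross := finrank_range_crossProduct_comp_of_surjective coeffs_ne_zero tail_surjective
  have rank_nullity_cross := LinearMap.finrank_range_add_finrank_ker
    (crossProduct ![A, B, C] ∘ₗ LinearMap.funLeft K K Fin.succ)
  have rank_nullity := LinearMap.finrank_range_add_finrank_ker T
  rw [← ker_bracket_map_eq_ker_crossProduct_comp_tail hT, rank_cross, Module.finrank_fin_fun]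
    at rank_nullity_cross
  rw [Module.finrank_fin_fun] at rank_nullity
  lia

/-- The bracket map `[Λ₀, −] : H⁰(S₀, Θ) → H⁰(S₀, ∧²Θ)` for
`Λ₀ = (A + Bξ + Cξ²)·∂/∂ξ ∧ ∂/∂u` on `S₀ = X × ℙ¹` has kernel of dimension 2 and
range of dimension 2 when `(A, B, C) ≠ (0, 0, 0)`. -/
theorem bracket_map_S0_rank
    (A B C : ℂ) (hABC : (A, B, C) ≠ (0, 0, 0))
    (T : (Fin 4 → ℂ) →ₗ[ℂ] (Fin 3 → ℂ))
    (hT : ∀ t : Fin 4 → ℂ,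
      T t = ![A * t 2 - B * t 1, 2 * (A * t 3 - C * t 1), B * t 3 - C * t 2]) :
    Module.finrank ℂ ↥(LinearMap.ker T) = 2 ∧
    Module.finrank ℂ ↥(LinearMap.range T) = 2 :=
  bracket_map_S0_rank_general A B C hABC T hT
end
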